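/- arXiv:2008.03871 — 3 statements merged into one kernel-verified Lean document; each statement's English description precedes it below -/
import Mathlib

section
/- Let K ≥ 3 be an integer, let x₁, …, x_K be real numbers with x_k < 0 for every k and |x₁| ≥ |x₂| ≥ ⋯ ≥ |x_K|, and let w = 0. Define k* = min{ k′ ∈ {1, …, K−1} : w + Σ_{k=1}^{k′} x_k < −(K − k′)·|x_{k′}| }, with the convention k* = K if no such k′ exists. Then k* ≤ ⌊K/2⌋ + 1, and hence the number of transmissions saved satisfies K − k* ≥ ⌈K/2⌉ − 1. -/
/-- under the ordered-CUSUM stopping rule with previous CUSUM value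
`w = 0` and all clique statistics negative, the number of transmissions made
satisfies `k* ≤ ⌊K/2⌋ + 1`, hence `K - k* ≥ ⌈K/2⌉ - 1`. -/
theorem stmt_6 (K : ℕ) (hK : 3 ≤ K) (x : ℕ → ℝ)
    (hneg : ∀ k, 1 ≤ k → k ≤ K → x k < 0)
    (hord : ∀ k, 1 ≤ k → k < K → |x (k + 1)| ≤ |x k|)
    (w : ℝ) (hw : w = 0)
    (kstar : ℕ)
    (hne : ({k' | 1 ≤ k' ∧ k' ≤ K - 1 ∧
        w + ∑ k ∈ Finset.Icc 1 k', x k < -((K : ℝ) - (k' : ℝ)) * |x k'|} : Set ℕ).Nonempty →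
      kstar = sInf {k' | 1 ≤ k' ∧ k' ≤ K - 1 ∧
        w + ∑ k ∈ Finset.Icc 1 k', x k < -((K : ℝ) - (k' : ℝ)) * |x k'|})
    (hemp : ¬({k' | 1 ≤ k' ∧ k' ≤ K - 1 ∧
        w + ∑ k ∈ Finset.Icc 1 k', x k < -((K : ℝ) - (k' : ℝ)) * |x k'|} : Set ℕ).Nonempty →
      kstar = K) :
    kstar ≤ K / 2 + 1 ∧ (K + 1) / 2 - 1 ≤ K - kstar := by
  have key : ∀ n : ℕ, n + 1 ≤ K →
      ∑ k ∈ Finset.Icc 1 (n + 1), x k ≤ ((n + 1 : ℕ) : ℝ) * x (n + 1) := by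
    intro n
    induction n with
    | zero => intro _; simp
    | succ n ih =>
      intro h
      have h1 := ih (by omega)
      have h2 := hord (n + 1) (by omega) (by omega)
      rw [abs_of_neg (hneg (n + 1) (by omega) (by omega)),
        abs_of_neg (hneg (n + 1 + 1) (by omega) h)] at h2
      rw [Finset.sum_Icc_succ_top (by omega)]
      have h3 : ((n + 1 : ℕ) : ℝ) * x (n + 1) ≤ ((n + 1 : ℕ) : ℝ) * x (n + 1 + 1) :=
        mul_le_mul_of_nonneg_left (by linarith) (Nat.cast_nonneg _)
      push_cast at *
      linarith
  have hmem : K / 2 + 1 ∈ ({k' | 1 ≤ k' ∧ k' ≤ K - 1 ∧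
      w + ∑ k ∈ Finset.Icc 1 k', x k < -((K : ℝ) - (k' : ℝ)) * |x k'|} : Set ℕ) := by
    refine ⟨by omega, by omega, ?_⟩
    have h1 := key (K / 2) (by omega)
    have h2 := hneg (K / 2 + 1) (by omega) (by omega)
    have h3 : (K : ℝ) < 2 * ((K / 2 + 1 : ℕ) : ℝ) := by
      have : K < 2 * (K / 2 + 1) := by omega
      exact_mod_cast this
    rw [abs_of_neg h2, hw]
    nlinarith [mul_pos (sub_pos.2 h3) (neg_pos.2 h2)]
  have h := hne ⟨_, hmem⟩
  have h' : kstar ≤ K / 2 + 1 := h ▸ Nat.sInf_le hmem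
  exact ⟨h', by omega⟩
end

section
/- Let K ≥ 2 be an integer and let (Ω, 𝔽, P) be a probability space. Let W : Ω → ℝ be a random variable with W ≥ 0 everywhere, let L₁, …, L_K : Ω → ℝ be random variables, and let L̂₁, …, L̂_K : Ω → ℝ be random variables such that for every ω ∈ Ω, (L̂₁(ω), …, L̂_K(ω)) is a permutation (rearrangement) of (L₁(ω), …, L_K(ω)) satisfying |L̂₁(ω)| ≥ |L̂₂(ω)| ≥ ⋯ ≥ |L̂_K(ω)|. Define the random variable k* : Ω → {1,…,K} by k*(ω) = min{ k′ ∈ {1,…,K−1} : W(ω) + Σ_{k=1}^{k′} L̂_k(ω) < −(K − k′)·|L̂_{k′}(ω)| }, with k*(ω) = K if no such k′ exists (assume k* is measurable). Then the average number of transmissions saved satisfies E[K − k*] ≥ (⌈K/2⌉ − 1) · P( W = 0 and L_k < 0 for all k = 1, …, K ). -/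
open MeasureTheory
open scoped ProbabilityTheory

/-- Theorem 2 of the paper: the average number of transmissions saved
by the ordered-CUSUM stopping rule satisfies
`E[K - k*] ≥ (⌈K/2⌉ - 1) · P(W = 0 and Lₖ < 0 for all k)`. -/
theorem stmt_8 (K : ℕ) (hK : 2 ≤ K)
    {Ω : Type*} [MeasureSpace Ω] [IsProbabilityMeasure (ℙ : Measure Ω)]
    (W : Ω → ℝ) (hW : ∀ ω, 0 ≤ W ω)
    (L Lhat : ℕ → Ω → ℝ)
    (hperm : ∀ ω, ∃ σ : Equiv.Perm ℕ,
      (∀ k ∈ Finset.Icc 1 K, σ k ∈ Finset.Icc 1 K) ∧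
      ∀ k ∈ Finset.Icc 1 K, Lhat k ω = L (σ k) ω)
    (hord : ∀ ω, ∀ k, 1 ≤ k → k < K → |Lhat (k + 1) ω| ≤ |Lhat k ω|)
    (kstar : Ω → ℕ) (hkmeas : Measurable kstar)
    (hne : ∀ ω, ({k' | 1 ≤ k' ∧ k' ≤ K - 1 ∧
        W ω + ∑ k ∈ Finset.Icc 1 k', Lhat k ω <
          -((K : ℝ) - (k' : ℝ)) * |Lhat k' ω|} : Set ℕ).Nonempty →
      kstar ω = sInf {k' | 1 ≤ k' ∧ k' ≤ K - 1 ∧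
        W ω + ∑ k ∈ Finset.Icc 1 k', Lhat k ω <
          -((K : ℝ) - (k' : ℝ)) * |Lhat k' ω|})
    (hemp : ∀ ω, ¬({k' | 1 ≤ k' ∧ k' ≤ K - 1 ∧
        W ω + ∑ k ∈ Finset.Icc 1 k', Lhat k ω <
          -((K : ℝ) - (k' : ℝ)) * |Lhat k' ω|} : Set ℕ).Nonempty →
      kstar ω = K) :
    ((((K + 1) / 2 : ℕ) : ℝ) - 1) *
        ((ℙ : Measure Ω) {ω | W ω = 0 ∧ ∀ k, 1 ≤ k → k ≤ K → L k ω < 0}).toReal ≤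
      ∫ ω : Ω, ((K : ℝ) - (kstar ω : ℝ)) ∂(ℙ : Measure Ω) := by
  have hle : ∀ ω, kstar ω ≤ K := by
    intro ω
    by_cases h : ({k' | 1 ≤ k' ∧ k' ≤ K - 1 ∧
        W ω + ∑ k ∈ Finset.Icc 1 k', Lhat k ω <
          -((K : ℝ) - (k' : ℝ)) * |Lhat k' ω|} : Set ℕ).Nonempty
    · rw [hne ω h]
      have := (Nat.sInf_mem h).2.1
      omega
    · exact (hemp ω h).le
  have hsub : {ω | W ω = 0 ∧ ∀ k, 1 ≤ k → k ≤ K → L k ω < 0} ⊆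
      {ω | kstar ω ≤ K / 2 + 1} := by
    rintro ω ⟨hW0, hL⟩
    show kstar ω ≤ K / 2 + 1
    by_cases hK2 : K = 2
    · have := hle ω
      omega
    obtain ⟨σ, hσ, hLσ⟩ := hperm ω
    have hneg : ∀ k, 1 ≤ k → k ≤ K → Lhat k ω < 0 := by
      intro k h1 h2
      have hk : k ∈ Finset.Icc 1 K := Finset.mem_Icc.2 ⟨h1, h2⟩
      rw [hLσ k hk]
      have := Finset.mem_Icc.1 (hσ k hk)
      exact hL _ this.1 this.2
    have hanti : ∀ m, m ≤ K → ∀ k, 1 ≤ k → k ≤ m → |Lhat m ω| ≤ |Lhat k ω| := by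
      intro m hm k h1 hkm
      induction m, hkm using Nat.le_induction with
      | base => exact le_rfl
      | succ n hn ih =>
        exact (hord ω n (by omega) (by omega)).trans (ih (by omega))
    obtain ⟨m, hm⟩ : ∃ m, m = K / 2 + 1 := ⟨_, rfl⟩
    rw [← hm]
    have hmem : m ∈ ({k' | 1 ≤ k' ∧ k' ≤ K - 1 ∧
        W ω + ∑ k ∈ Finset.Icc 1 k', Lhat k ω <
          -((K : ℝ) - (k' : ℝ)) * |Lhat k' ω|} : Set ℕ) := by
      refine ⟨by omega, by omega, ?_⟩
      have hs : ∑ k ∈ Finset.Icc 1 m, Lhat k ω ≤ ∑ k ∈ Finset.Icc 1 m, (-|Lhat m ω|) := by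
        refine Finset.sum_le_sum fun k hk => ?_
        obtain ⟨h1, h2⟩ := Finset.mem_Icc.1 hk
        have h3 := hanti m (by omega) k h1 h2
        rw [abs_of_neg (hneg k h1 (by omega))] at h3
        linarith
      rw [Finset.sum_const, Nat.card_Icc, nsmul_eq_mul, Nat.add_sub_cancel] at hs
      have hpos : 0 < |Lhat m ω| := abs_pos.2 (hneg m (by omega) (by omega)).ne
      have h2m : (K : ℝ) < 2 * m := by
        have : K < 2 * m := by omega
        exact_mod_cast this
      rw [hW0]
      nlinarith [mul_pos (sub_pos.2 h2m) hpos]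
    rw [hne ω ⟨m, hmem⟩]
    exact Nat.sInf_le hmem
  have hA : MeasurableSet {ω | kstar ω ≤ K / 2 + 1} := measurableSet_le hkmeas measurable_const
  have hc : (((K + 1) / 2 : ℕ) : ℝ) - 1 = (K : ℝ) - ((K / 2 + 1 : ℕ) : ℝ) := by
    have : (K + 1) / 2 + (K / 2 + 1) = K + 1 := by omega
    have h2 : (((K + 1) / 2 : ℕ) : ℝ) + ((K / 2 + 1 : ℕ) : ℝ) = K + 1 := by exact_mod_cast this
    linarith
  have hc0 : (0 : ℝ) ≤ (((K + 1) / 2 : ℕ) : ℝ) - 1 := by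
    have : 1 ≤ (K + 1) / 2 := by omega
    have h2 : (1 : ℝ) ≤ (((K + 1) / 2 : ℕ) : ℝ) := by exact_mod_cast this
    linarith
  have hleR : ∀ ω, (kstar ω : ℝ) ≤ K := fun ω => by exact_mod_cast hle ω
  have hint : Integrable (fun ω : Ω => (K : ℝ) - (kstar ω : ℝ)) (ℙ : Measure Ω) := by
    have hmeas : Measurable (fun ω : Ω => (K : ℝ) - (kstar ω : ℝ)) :=
      measurable_const.sub (measurable_from_top.comp hkmeas)
    refine Integrable.of_bound hmeas.aestronglyMeasurable (K : ℝ) (Filter.Eventually.of_forall ?_)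
    intro ω
    have h1 := hleR ω
    have h2 : (0 : ℝ) ≤ kstar ω := Nat.cast_nonneg _
    rw [Real.norm_eq_abs, abs_of_nonneg (by linarith)]
    linarith
  calc _ ≤ ((((K + 1) / 2 : ℕ) : ℝ) - 1) *
        ((ℙ : Measure Ω) {ω | kstar ω ≤ K / 2 + 1}).toReal := by
        refine mul_le_mul_of_nonneg_left ?_ hc0
        exact ENNReal.toReal_mono (measure_ne_top _ _) (measure_mono hsub)
    _ = ∫ ω : Ω, Set.indicator {ω | kstar ω ≤ K / 2 + 1}
          (fun _ => (((K + 1) / 2 : ℕ) : ℝ) - 1) ω ∂(ℙ : Measure Ω) := by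
        rw [integral_indicator_const _ hA, smul_eq_mul, mul_comm]
        rfl
    _ ≤ _ := by
        refine integral_mono ((integrable_const _).indicator hA) hint fun ω => ?_
        by_cases h : ω ∈ {ω | kstar ω ≤ K / 2 + 1}
        · simp only [Set.indicator_of_mem h]
          have h' : (kstar ω : ℝ) ≤ ((K / 2 + 1 : ℕ) : ℝ) := Nat.cast_le.2 h
          rw [hc]
          linarith
        · simp only [Set.indicator_of_notMem h]
          linarith [hleR ω]
end

section
/- Let K ≥ 3 and τ ≥ 1 be integers and, for each time slot i with 1 ≤ i ≤ τ − 1, let ℓ_{i,1}, …, ℓ_{i,K} be real numbers with ℓ_{i,k} < 0 for all k, and let ℓ̂_{i,1}, …, ℓ̂_{i,K} be a permutation of them with |ℓ̂_{i,1}| ≥ ⋯ ≥ |ℓ̂_{i,K}|. Define W₀ = 0, W_i = max{0, W_{i−1} + Σ_{k=1}^{K} ℓ_{i,k}}, and for each slot i define k*_i = min{ k′ ∈ {1,…,K−1} : W_{i−1} + Σ_{k=1}^{k′} ℓ̂_{i,k} < −(K − k′)·|ℓ̂_{i,k′}| }, with k*_i = K if no such k′ exists. Then for every i = 1, …, τ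 − 1 one has W_{i−1} = 0 and K − k*_i ≥ ⌈K/2⌉ − 1, and consequently the total number of transmissions saved satisfies Σ_{i=1}^{τ−1} (K − k*_i) ≥ (⌈K/2⌉ − 1)(τ − 1). -/
/-- deterministic core of Theorem 3 of the paper: before the change
time `τ`, the CUSUM statistic is `0` at the start of every slot, every slot saves at
least `⌈K/2⌉ - 1` transmissions, and hence the total number of transmissions saved
over slots `1, …, τ-1` is at least `(⌈K/2⌉ - 1)(τ - 1)`. -/
theorem stmt_10 (K : ℕ) (hK : 3 ≤ K) (τ : ℕ) (hτ : 1 ≤ τ)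
    (ℓ ℓhat : ℕ → ℕ → ℝ)
    (hneg : ∀ i k, 1 ≤ i → i ≤ τ - 1 → 1 ≤ k → k ≤ K → ℓ i k < 0)
    (hperm : ∀ i, 1 ≤ i → i ≤ τ - 1 → ∃ σ : Equiv.Perm ℕ,
      (∀ k ∈ Finset.Icc 1 K, σ k ∈ Finset.Icc 1 K) ∧
      ∀ k ∈ Finset.Icc 1 K, ℓhat i k = ℓ i (σ k))
    (hord : ∀ i k, 1 ≤ i → i ≤ τ - 1 → 1 ≤ k → k < K →
      |ℓhat i (k + 1)| ≤ |ℓhat i k|)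
    (W : ℕ → ℝ) (hW0 : W 0 = 0)
    (hW : ∀ i, 1 ≤ i → W i = max 0 (W (i - 1) + ∑ k ∈ Finset.Icc 1 K, ℓ i k))
    (kstar : ℕ → ℕ)
    (hne : ∀ i, ({k' | 1 ≤ k' ∧ k' ≤ K - 1 ∧
        W (i - 1) + ∑ k ∈ Finset.Icc 1 k', ℓhat i k <
          -((K : ℝ) - (k' : ℝ)) * |ℓhat i k'|} : Set ℕ).Nonempty →
      kstar i = sInf {k' | 1 ≤ k' ∧ k' ≤ K - 1 ∧
        W (i - 1) + ∑ k ∈ Finset.Icc 1 k', ℓhat i k <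
          -((K : ℝ) - (k' : ℝ)) * |ℓhat i k'|})
    (hemp : ∀ i, ¬({k' | 1 ≤ k' ∧ k' ≤ K - 1 ∧
        W (i - 1) + ∑ k ∈ Finset.Icc 1 k', ℓhat i k <
          -((K : ℝ) - (k' : ℝ)) * |ℓhat i k'|} : Set ℕ).Nonempty →
      kstar i = K) :
    (∀ i, 1 ≤ i → i ≤ τ - 1 →
      W (i - 1) = 0 ∧ (K + 1) / 2 - 1 ≤ K - kstar i) ∧
    ((K + 1) / 2 - 1) * (τ - 1) ≤ ∑ i ∈ Finset.Icc 1 (τ - 1), (K - kstar i) := by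
  have hWz : ∀ j, j ≤ τ - 1 → W j = 0 := by
    intro j
    induction j with
    | zero => intro _; exact hW0
    | succ n ih =>
      intro hn
      rw [hW (n + 1) (by omega), Nat.add_sub_cancel, ih (by omega), zero_add]
      apply max_eq_left
      apply Finset.sum_nonpos
      intro k hk
      rw [Finset.mem_Icc] at hk
      exact (hneg (n + 1) k (by omega) hn hk.1 hk.2).le
  have key : ∀ i, 1 ≤ i → i ≤ τ - 1 →
      W (i - 1) = 0 ∧ (K + 1) / 2 - 1 ≤ K - kstar i := by
    intro i h1 h2
    have hw : W (i - 1) = 0 := hWz (i - 1) (by omega)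
    refine ⟨hw, ?_⟩
    have hhat : ∀ k, 1 ≤ k → k ≤ K → ℓhat i k < 0 := by
      intro k hk1 hk2
      obtain ⟨σ, hσ, he⟩ := hperm i h1 h2
      have hk : k ∈ Finset.Icc 1 K := Finset.mem_Icc.2 ⟨hk1, hk2⟩
      have hm := Finset.mem_Icc.1 (hσ k hk)
      rw [he k hk]
      exact hneg i _ h1 h2 hm.1 hm.2
    have hanti : ∀ k m, 1 ≤ k → k ≤ m → m ≤ K → |ℓhat i m| ≤ |ℓhat i k| := by
      intro k m hk hkm
      induction m, hkm using Nat.le_induction with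
      | base => intro _; exact le_rfl
      | succ n hn ih =>
        intro hnK
        exact (hord i n h1 h2 (by omega) (by omega)).trans (ih (by omega))
    have hmem : (K / 2 + 1) ∈ ({k' | 1 ≤ k' ∧ k' ≤ K - 1 ∧
        W (i - 1) + ∑ k ∈ Finset.Icc 1 k', ℓhat i k <
          -((K : ℝ) - (k' : ℝ)) * |ℓhat i k'|} : Set ℕ) := by
      have hmK : K / 2 + 1 ≤ K - 1 := by omega
      have h2m : K < 2 * (K / 2 + 1) := by omega
      generalize K / 2 + 1 = m at hmK h2m
      refine ⟨by omega, hmK, ?_⟩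
      rw [hw, zero_add]
      have hs : ∑ k ∈ Finset.Icc 1 m, ℓhat i k ≤ ∑ k ∈ Finset.Icc 1 m, (-|ℓhat i m|) := by
        apply Finset.sum_le_sum
        intro k hk
        rw [Finset.mem_Icc] at hk
        have ha := hanti k m hk.1 hk.2 (by omega)
        rw [abs_of_neg (hhat k hk.1 (by omega))] at ha
        linarith
      rw [Finset.sum_const, Nat.card_Icc, Nat.add_sub_cancel, nsmul_eq_mul] at hs
      have hpos : 0 < |ℓhat i m| := abs_pos.2 (hhat m (by omega) (by omega)).ne
      have h2m' : (K : ℝ) < 2 * m := by exact_mod_cast h2m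
      nlinarith
    have hle := Nat.sInf_le hmem
    rw [← hne i ⟨_, hmem⟩] at hle
    omega
  refine ⟨key, ?_⟩
  have hsum := Finset.card_nsmul_le_sum (Finset.Icc 1 (τ - 1)) (fun i => K - kstar i)
    ((K + 1) / 2 - 1) (by
      intro i hi
      rw [Finset.mem_Icc] at hi
      exact (key i hi.1 hi.2).2)
  rw [Nat.card_Icc, Nat.add_sub_cancel, smul_eq_mul, mul_comm] at hsum
  exact hsum
end
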